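/- There exist universal constants C, c > 0 such that the following holds. Let V₁, …, V_N be linear subspaces of ℝ^n, each of dimension at most s, let α ∈ (0,1), and let A ∈ ℝ^{m×n} be a random matrix with i.i.d. N(0, 1/m) entries. If m ≥ C·(log N + s)/α², then with probability at least 1 − exp(−c·α²·m), for all x₁, x₂ ∈ ⋃_{i=1}^N V_i one has ‖A(x₁ − x₂)‖₂ ≥ (1 − α)·‖x₁ − x₂‖₂; that is, A satisfies S-REC(⋃_i V_i, 1 − α, 0). -/

import Mathlib

open MeasureTheory ProbabilityTheory

/-- The law of an `m × n` random matrix with i.i.d. `N(0, 1/m)` entries. -/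
noncomputable def gaussMatrix (m n : ℕ) : Measure (Fin m → Fin n → ℝ) :=
  Measure.pi fun _ => Measure.pi fun _ => gaussianReal 0 ((m : NNReal))⁻¹

/-!
Differences of points of `⋃ i, V i` lie in the subspaces `V i ⊔ V j`. For a single vector `z`, the
entries of `A z` are independent `N(0, ‖z‖² / m)` variables, so Chernoff's bound for sums of
squares of Gaussians gives `|‖A z‖² - ‖z‖²| ≤ τ ‖z‖²` outside an event of probability
`2 exp (-τ² m / 16)`. The form `‖A z‖² - ‖z‖²` belongs to the symmetric operator `A* A - 1`, whose
norm on a subspace is at most twice the maximum of the form on a `1/4`-net of the unit ball. A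
subspace of dimension `2 s` has such a net with at most `9 ^ (2 s)` points, and a union bound over
the nets of the `N²` subspaces `V i ⊔ V j` costs a factor `N² 9 ^ (2 s)`.
-/

open Metric Module
open scoped NNReal ENNReal Function InnerProductSpace

section Nets

variable {E : Type*} [NormedAddCommGroup E] [NormedSpace ℝ E] [FiniteDimensional ℝ E]
  {ε : ℝ≥0} {r : ℝ}

theorem card_le_of_isSeparated_of_subset_closedBall (hε : 0 < ε) (hr : 0 ≤ r) {T : Finset E}
    {x : E} (hTr : (T : Set E) ⊆ closedBall x r) (hT : IsSeparated ε (T : Set E)) :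
    (T.card : ℝ) ≤ (1 + 2 * r / ε) ^ finrank ℝ E := by
  borelize E
  let μ : Measure E := Measure.addHaar
  have hε' : (0 : ℝ) < ε := hε
  have hdisj : (T : Set E).Pairwise (Disjoint on fun y => ball y (ε / 2 : ℝ)) := by
    intro y hy z hz hyz
    have hlt : (ε : ℝ≥0∞) < edist y z := hT hy hz hyz
    rw [edist_nndist, ENNReal.coe_lt_coe, ← NNReal.coe_lt_coe, coe_nndist] at hlt
    exact ball_disjoint_ball (by linarith)
  have hsub : ⋃ y ∈ T, ball y (ε / 2 : ℝ) ⊆ ball x (r + ε / 2) :=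
    Set.iUnion₂_subset fun y hy => ball_subset_ball' (by
      have := mem_closedBall.1 (hTr hy)
      linarith)
  have hvol : ∀ (y : E) {ρ : ℝ}, 0 < ρ →
      μ.real (ball y ρ) = ρ ^ finrank ℝ E * μ.real (ball 0 1) := fun y ρ hρ => by
    rw [measureReal_def, μ.addHaar_ball_of_pos y hρ, ENNReal.toReal_mul,
      ENNReal.toReal_ofReal (by positivity), measureReal_def]
  have hunit : 0 < μ.real (ball (0 : E) 1) :=
    ENNReal.toReal_pos (measure_ball_pos μ 0 one_pos).ne' measure_ball_lt_top.ne
  have hpack : T.card * (ε / 2 : ℝ) ^ finrank ℝ E * μ.real (ball (0 : E) 1) ≤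
      (r + ε / 2) ^ finrank ℝ E * μ.real (ball (0 : E) 1) :=
    calc T.card * (ε / 2 : ℝ) ^ finrank ℝ E * μ.real (ball (0 : E) 1)
        = μ.real (⋃ y ∈ T, ball y (ε / 2 : ℝ)) := by
          rw [measureReal_biUnion_finset hdisj (fun _ _ => measurableSet_ball)
            (fun _ _ => measure_ball_lt_top.ne)]
          simp only [hvol _ (half_pos hε'), Finset.sum_const, nsmul_eq_mul, mul_assoc]
      _ ≤ μ.real (ball x (r + ε / 2)) := measureReal_mono hsub measure_ball_lt_top.ne
      _ = (r + ε / 2) ^ finrank ℝ E * μ.real (ball (0 : E) 1) := hvol x (by positivity)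
  have hratio : 1 + 2 * r / ε = (r + ε / 2) / (ε / 2) := by field_simp; ring
  rw [hratio, div_pow, le_div_iff₀ (by positivity)]
  exact le_of_mul_le_mul_right hpack hunit

theorem exists_finset_isCover_closedBall (hε : 0 < ε) (hr : 0 ≤ r) (x : E) :
    ∃ T : Finset E, (T : Set E) ⊆ closedBall x r ∧ IsCover ε (closedBall x r) (T : Set E) ∧
      (T.card : ℝ) ≤ (1 + 2 * r / ε) ^ finrank ℝ E := by
  have hfin : packingNumber ε (closedBall x r) ≠ ⊤ := by
    obtain ⟨N, -, hNfin, hN⟩ :=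
      exists_finite_isCover_of_isCompact (half_pos hε).ne' (isCompact_closedBall x r)
    have hle := (packingNumber_two_mul_le_externalCoveringNumber (ε / 2) (closedBall x r)).trans
      hN.externalCoveringNumber_le_encard
    rw [mul_div_cancel₀ _ two_ne_zero] at hle
    exact (hle.trans_lt hNfin.encard_lt_top).ne
  have hmax : (maximalSeparatedSet ε (closedBall x r)).Finite :=
    Set.encard_ne_top_iff.1 (encard_maximalSeparatedSet hfin ▸ hfin)
  lift maximalSeparatedSet ε (closedBall x r) to Finset E using hmax with T hT
  refine ⟨T, hT ▸ maximalSeparatedSet_subset, hT ▸ isCover_maximalSeparatedSet hfin, ?_⟩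
  exact card_le_of_isSeparated_of_subset_closedBall hε hr (hT ▸ maximalSeparatedSet_subset)
    (hT ▸ isSeparated_maximalSeparatedSet)

end Nets

section QuadraticForms

variable {𝕜 E : Type*} [RCLike 𝕜] [NormedAddCommGroup E] [InnerProductSpace 𝕜 E]

theorem abs_reApplyInnerSelf_sub_le (T : E →L[𝕜] E) (x y : E) :
    |T.reApplyInnerSelf x - T.reApplyInnerSelf y| ≤ ‖T‖ * ‖x - y‖ * (‖x‖ + ‖y‖) := by
  have hsplit : T.reApplyInnerSelf x - T.reApplyInnerSelf y =
      RCLike.re (⟪T x, x - y⟫_𝕜 + ⟪T (x - y), y⟫_𝕜) := by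
    simp only [ContinuousLinearMap.reApplyInnerSelf_apply, inner_sub_right, inner_sub_left,
      map_sub, map_add]
    ring
  calc |T.reApplyInnerSelf x - T.reApplyInnerSelf y|
      ≤ ‖⟪T x, x - y⟫_𝕜‖ + ‖⟪T (x - y), y⟫_𝕜‖ :=
        hsplit ▸ (RCLike.abs_re_le_norm _).trans (norm_add_le _ _)
    _ ≤ ‖T‖ * ‖x‖ * ‖x - y‖ + ‖T‖ * ‖x - y‖ * ‖y‖ := by
        gcongr <;> refine (norm_inner_le_norm _ _).trans ?_ <;> gcongr <;> exact T.le_opNorm _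
    _ = ‖T‖ * ‖x - y‖ * (‖x‖ + ‖y‖) := by ring

theorem one_sub_two_mul_opNorm_le_of_isCover {T : E →L[𝕜] E} (hT : T.IsSymmetric) {N : Set E}
    {ε : ℝ≥0} (hN : N ⊆ closedBall 0 1) (hcover : IsCover ε (closedBall 0 1) N) {M : ℝ}
    (hM : ∀ y ∈ N, |T.reApplyInnerSelf y| ≤ M) : (1 - 2 * ε) * ‖T‖ ≤ M := by
  have hball : ∀ x ∈ closedBall (0 : E) 1, |T.reApplyInnerSelf x| ≤ M + 2 * ε * ‖T‖ := by
    intro x hx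
    obtain ⟨y, hy, hxy⟩ := Set.mem_iUnion₂.1 (isCover_iff_subset_iUnion_closedBall.1 hcover hx)
    have hdiff : |T.reApplyInnerSelf x - T.reApplyInnerSelf y| ≤ ‖T‖ * ε * (1 + 1) := by
      refine (abs_reApplyInnerSelf_sub_le T x y).trans ?_
      gcongr
      exacts [mem_closedBall_iff_norm.1 hxy, mem_closedBall_zero_iff.1 hx,
        mem_closedBall_zero_iff.1 (hN hy)]
    have htri := abs_sub_abs_le_abs_sub (T.reApplyInnerSelf x) (T.reApplyInnerSelf y)
    linarith [hM y hy]
  suffices h : ‖T‖ ≤ M + 2 * ε * ‖T‖ by linarith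
  refine (T.norm_eq_iSup_rayleighQuotient hT).trans_le (ciSup_le fun x => ?_)
  rcases eq_or_ne x 0 with rfl | hx
  · simpa [ContinuousLinearMap.reApplyInnerSelf_apply] using hball 0 (by simp)
  · have hnorm : ‖((‖x‖⁻¹ : ℝ) : 𝕜) • x‖ = 1 := by simp [norm_smul, hx]
    have hunit := hball _ (mem_closedBall_zero_iff.2 hnorm.le)
    rwa [← T.rayleigh_smul x (c := ((‖x‖⁻¹ : ℝ) : 𝕜)) (by simpa using hx),
      ContinuousLinearMap.rayleighQuotient, hnorm, one_pow, div_one]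

end QuadraticForms

section NearIsometries

/-- `L` preserves the squared norm of `z` up to a relative error `τ`: the restricted isometry
condition at a single vector, so that it can be imposed on a net first. -/
def IsNearIsometryAt {E F : Type*} [Norm E] [Norm F] (τ : ℝ) (L : E → F) (z : E) : Prop :=
  |‖L z‖ ^ 2 - ‖z‖ ^ 2| ≤ τ * ‖z‖ ^ 2

theorem IsNearIsometryAt.one_sub_mul_norm_le {E F : Type*} [SeminormedAddCommGroup E]
    [SeminormedAddCommGroup F] {L : E → F} {z : E} {α : ℝ}
    (h : IsNearIsometryAt α L z) (hα₀ : 0 ≤ α) (hα₁ : α ≤ 1) : (1 - α) * ‖z‖ ≤ ‖L z‖ := by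
  refine le_of_sq_le_sq ?_ (norm_nonneg _)
  calc ((1 - α) * ‖z‖) ^ 2 = (1 - α) ^ 2 * ‖z‖ ^ 2 := mul_pow _ _ _
    _ ≤ (1 - α) * ‖z‖ ^ 2 := by
        gcongr
        exact pow_le_of_le_one (by linarith) (by linarith) two_ne_zero
    _ ≤ ‖L z‖ ^ 2 := by linarith [(abs_le.1 h).1]

variable {E F : Type*} [NormedAddCommGroup E] [InnerProductSpace ℝ E]
  [NormedAddCommGroup F] [InnerProductSpace ℝ F]

theorem isNearIsometryAt_of_isCover [CompleteSpace E] [CompleteSpace F] (L : E →L[ℝ] F)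
    {N : Set E} {ε : ℝ≥0} (hε : 2 * (ε : ℝ) < 1) (hN : N ⊆ closedBall 0 1)
    (hcover : IsCover ε (closedBall 0 1) N) {τ : ℝ} (hτ : 0 ≤ τ)
    (hL : ∀ y ∈ N, IsNearIsometryAt τ L y) (x : E) :
    IsNearIsometryAt (τ / (1 - 2 * ε)) L x := by
  let T : E →L[ℝ] E := L.adjoint ∘L L - .id ℝ E
  have hT : T.IsSymmetric := fun x y => by
    simp [T, inner_sub_left, inner_sub_right, ContinuousLinearMap.adjoint_inner_left,
      ContinuousLinearMap.adjoint_inner_right]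
  have hform : ∀ x, T.reApplyInnerSelf x = ‖L x‖ ^ 2 - ‖x‖ ^ 2 := fun x => by
    simp [T, ContinuousLinearMap.reApplyInnerSelf_apply, inner_sub_left,
      ContinuousLinearMap.adjoint_inner_left]
  have hnet : ∀ y ∈ N, |T.reApplyInnerSelf y| ≤ τ := fun y hy => by
    rw [hform]
    exact (hL y hy).trans (mul_le_of_le_one_right hτ
      (pow_le_one₀ (norm_nonneg y) (mem_closedBall_zero_iff.1 (hN hy))))
  have hnorm : ‖T‖ ≤ τ / (1 - 2 * ε) := by
    rw [le_div_iff₀' (by linarith)]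
    exact one_sub_two_mul_opNorm_le_of_isCover hT hN hcover hnet
  calc |‖L x‖ ^ 2 - ‖x‖ ^ 2| = |⟪T x, x⟫_ℝ| := by
        rw [← hform, ContinuousLinearMap.reApplyInnerSelf_apply, RCLike.re_to_real]
    _ ≤ ‖T‖ * ‖x‖ * ‖x‖ :=
        (abs_real_inner_le_norm _ _).trans (by gcongr; exact T.le_opNorm x)
    _ ≤ τ / (1 - 2 * ε) * ‖x‖ ^ 2 := by rw [mul_assoc, ← sq]; gcongr

variable {Ω : Type*} {_ : MeasurableSpace Ω} {μ : Measure Ω} [CompleteSpace F]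
  {τ : ℝ} {p : ℝ≥0∞}

theorem measure_exists_not_isNearIsometryAt_le [FiniteDimensional ℝ E] (L : Ω → E →ₗ[ℝ] F)
    (hτ : 0 ≤ τ) (hL : ∀ z, μ {ω | ¬ IsNearIsometryAt τ (L ω) z} ≤ p) :
    μ {ω | ∃ x, ¬ IsNearIsometryAt (2 * τ) (L ω) x} ≤ 9 ^ finrank ℝ E * p := by
  have := FiniteDimensional.complete ℝ E
  obtain ⟨T, hT, hcover, hcard⟩ :=
    exists_finset_isCover_closedBall (ε := 1 / 4) (by norm_num) zero_le_one (0 : E)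
  have hsub : {ω | ∃ x, ¬ IsNearIsometryAt (2 * τ) (L ω) x} ⊆
      ⋃ y ∈ T, {ω | ¬ IsNearIsometryAt τ (L ω) y} := by
    intro ω hω
    by_contra hgood
    simp only [Set.mem_iUnion, Set.mem_ofPred_eq, not_exists, not_not] at hgood
    obtain ⟨x, hx⟩ := hω
    have hnear := isNearIsometryAt_of_isCover (LinearMap.toContinuousLinearMap (L ω))
      (by norm_num) hT hcover hτ hgood x
    rw [show τ / (1 - 2 * ((1 / 4 : ℝ≥0) : ℝ)) = 2 * τ by push_cast; ring] at hnear
    exact hx hnear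
  have hcard' : (T.card : ℝ≥0∞) ≤ 9 ^ finrank ℝ E := by
    rw [show 1 + 2 * 1 / ((1 / 4 : ℝ≥0) : ℝ) = 9 by norm_num] at hcard
    exact_mod_cast hcard
  calc μ {ω | ∃ x, ¬ IsNearIsometryAt (2 * τ) (L ω) x}
      ≤ ∑ y ∈ T, μ {ω | ¬ IsNearIsometryAt τ (L ω) y} :=
        (measure_mono hsub).trans (measure_biUnion_finset_le T _)
    _ ≤ T.card * p := by
        simpa only [nsmul_eq_mul] using Finset.sum_le_card_nsmul T _ p fun y _ => hL y
    _ ≤ 9 ^ finrank ℝ E * p := by gcongr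

theorem measure_exists_not_isNearIsometryAt_sub_le {ι : Type*} [Fintype ι]
    (V : ι → Submodule ℝ E) [∀ i, FiniteDimensional ℝ (V i)] {s : ℕ}
    (hV : ∀ i, finrank ℝ (V i) ≤ s) (L : Ω → E →ₗ[ℝ] F) (hτ : 0 ≤ τ)
    (hL : ∀ z, μ {ω | ¬ IsNearIsometryAt τ (L ω) z} ≤ p) :
    μ {ω | ∃ x₁ ∈ ⋃ i, (V i : Set E), ∃ x₂ ∈ ⋃ i, (V i : Set E),
      ¬ IsNearIsometryAt (2 * τ) (L ω) (x₁ - x₂)} ≤ Fintype.card ι ^ 2 * 9 ^ (2 * s) * p := by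
  have hpair : ∀ q : ι × ι,
      μ {ω | ∃ x : ↥(V q.1 ⊔ V q.2), ¬ IsNearIsometryAt (2 * τ) (L ω) (x : E)} ≤
        9 ^ (2 * s) * p := fun q => by
    refine (measure_exists_not_isNearIsometryAt_le (fun ω => L ω ∘ₗ (V q.1 ⊔ V q.2).subtype) hτ
      fun z => hL z).trans ?_
    have hdim := Submodule.finrank_add_le_finrank_add_finrank (V q.1) (V q.2)
    gcongr
    · norm_num
    · linarith [hV q.1, hV q.2]
  have hsub : {ω | ∃ x₁ ∈ ⋃ i, (V i : Set E), ∃ x₂ ∈ ⋃ i, (V i : Set E),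
      ¬ IsNearIsometryAt (2 * τ) (L ω) (x₁ - x₂)} ⊆
      ⋃ q : ι × ι, {ω | ∃ x : ↥(V q.1 ⊔ V q.2), ¬ IsNearIsometryAt (2 * τ) (L ω) (x : E)} := by
    rintro ω ⟨x₁, hx₁, x₂, hx₂, hω⟩
    obtain ⟨i, hi⟩ := Set.mem_iUnion.1 hx₁
    obtain ⟨j, hj⟩ := Set.mem_iUnion.1 hx₂
    have hmem : x₁ - x₂ ∈ V i ⊔ V j :=
      sub_mem (Submodule.mem_sup_left hi) (Submodule.mem_sup_right hj)
    exact Set.mem_iUnion.2 ⟨(i, j), ⟨x₁ - x₂, hmem⟩, hω⟩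
  calc
    _ ≤ ∑ q : ι × ι,
          μ {ω | ∃ x : ↥(V q.1 ⊔ V q.2), ¬ IsNearIsometryAt (2 * τ) (L ω) (x : E)} :=
        (measure_mono hsub).trans (measure_iUnion_fintype_le μ _)
    _ ≤ Fintype.card (ι × ι) * (9 ^ (2 * s) * p) := by
        simpa only [nsmul_eq_mul, Finset.card_univ] using
          Finset.sum_le_card_nsmul Finset.univ _ _ fun q _ => hpair q
    _ = Fintype.card ι ^ 2 * 9 ^ (2 * s) * p := by
        rw [Fintype.card_prod]; push_cast; ring

end NearIsometries

theorem exp_neg_add_two_mul_sq_le_one_sub {u : ℝ} (hu : u ≤ 1 / 2) :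
    Real.exp (-(u + 2 * u ^ 2)) ≤ 1 - u := by
  have hpos : 0 < 1 - u := by linarith
  rw [← Real.le_log_iff_exp_le hpos]
  refine le_trans ?_ (Real.one_sub_inv_le_log_of_pos hpos)
  have hinv : (1 - u)⁻¹ ≤ 1 + u + 2 * u ^ 2 := by
    rw [inv_le_iff_one_le_mul₀ hpos]
    linarith [mul_nonneg (sq_nonneg u) (show 0 ≤ 1 - 2 * u by linarith)]
  linarith

section ChiSquared

variable {v : ℝ≥0} {t : ℝ}

theorem mgf_sq_gaussianReal (ht : 2 * t * v < 1) :
    mgf (fun x => x ^ 2) (gaussianReal 0 v) t = (√(1 - 2 * t * v))⁻¹ := by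
  rcases eq_or_ne v 0 with rfl | hv
  · simp [mgf]
  have : (0 : ℝ) < v := NNReal.coe_pos.2 (pos_iff_ne_zero.2 hv)
  have hdensity : ∀ x : ℝ, gaussianPDFReal 0 v x * Real.exp (t * x ^ 2) =
      (√(2 * Real.pi * v))⁻¹ * Real.exp (-((1 - 2 * t * v) / (2 * v)) * x ^ 2) := fun x => by
    rw [gaussianPDFReal, mul_assoc, ← Real.exp_add]
    congr 2
    field_simp
    ring
  simp only [mgf, integral_gaussianReal_eq_integral_smul hv, smul_eq_mul, hdensity,
    integral_const_mul, integral_gaussian]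
  rw [← Real.sqrt_inv, ← Real.sqrt_inv, ← Real.sqrt_mul (by positivity)]
  congr 1
  field_simp

variable {Ω : Type*} {_ : MeasurableSpace Ω} {P : Measure Ω} {ι : Type*} [Fintype ι]
  {X : ι → Ω → ℝ}

theorem mgf_sum_sq_of_hasLaw_gaussianReal (hX : ∀ i, HasLaw (X i) (gaussianReal 0 v) P)
    (hind : iIndepFun X P) (ht : 2 * t * v < 1) :
    mgf (∑ i, X i ^ 2) P t = (√(1 - 2 * t * v))⁻¹ ^ Fintype.card ι := by
  have hsq : ∀ i, mgf (X i ^ 2) P t = (√(1 - 2 * t * v))⁻¹ := fun i => by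
    rw [← mgf_sq_gaussianReal ht, ← (hX i).map_eq, mgf_map (hX i).aemeasurable (by fun_prop)]
    rfl
  have hindsq : iIndepFun (fun i => X i ^ 2) P := by
    convert! hind.comp (fun _ (x : ℝ) => x ^ 2) fun _ => measurable_id.pow_const 2
  rw [hindsq.mgf_sum₀ fun i => (hX i).aemeasurable.pow_const 2]
  simp only [hsq, Finset.prod_const, Finset.card_univ]

theorem integrable_exp_mul_sum_sq_of_hasLaw_gaussianReal
    (hX : ∀ i, HasLaw (X i) (gaussianReal 0 v) P) (hind : iIndepFun X P) (ht : 2 * t * v < 1) :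
    Integrable (fun ω => Real.exp (t * (∑ i, X i ^ 2) ω)) P := by
  have : 0 < √(1 - 2 * t * v) := Real.sqrt_pos.2 (by linarith)
  have hmgf : mgf (∑ i, X i ^ 2) P t ≠ 0 := by
    rw [mgf_sum_sq_of_hasLaw_gaussianReal hX hind ht]
    positivity
  exact .of_integral_ne_zero hmgf

theorem mgf_sum_sq_le_of_hasLaw_gaussianReal (hX : ∀ i, HasLaw (X i) (gaussianReal 0 v) P)
    (hind : iIndepFun X P) (ht : 2 * t * v ≤ 1 / 2) :
    mgf (∑ i, X i ^ 2) P t ≤ Real.exp (Fintype.card ι * (t * v + 4 * (t * v) ^ 2)) := by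
  have hsqrt : Real.exp (-(t * v + 4 * (t * v) ^ 2)) ≤ √(1 - 2 * t * v) := by
    refine Real.le_sqrt_of_sq_le ?_
    rw [← Real.exp_nat_mul]
    convert! exp_neg_add_two_mul_sq_le_one_sub ht using 2
    push_cast; ring
  rw [mgf_sum_sq_of_hasLaw_gaussianReal hX hind (by linarith), Real.exp_nat_mul]
  gcongr
  rwa [inv_le_comm₀ ((Real.exp_pos _).trans_le hsqrt) (Real.exp_pos _), ← Real.exp_neg]

variable {τ : ℝ}

theorem measureReal_one_add_mul_le_sum_sq_le (hX : ∀ i, HasLaw (X i) (gaussianReal 0 v) P)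
    (hind : iIndepFun X P) (hv : v ≠ 0) (hτ₀ : 0 ≤ τ) (hτ₂ : τ ≤ 2) :
    P.real {ω | (1 + τ) * (Fintype.card ι * v) ≤ (∑ i, X i ^ 2) ω} ≤
      Real.exp (-(τ ^ 2 * Fintype.card ι / 16)) := by
  have := hind.isProbabilityMeasure
  have : (0 : ℝ) < v := NNReal.coe_pos.2 (pos_iff_ne_zero.2 hv)
  -- `t = τ / (8 v)` minimises the Chernoff exponent `-τ t v + 4 (t v)²`.
  have ht : 2 * (τ / (8 * v)) * v = τ / 4 := by field_simp; ring
  have hint := integrable_exp_mul_sum_sq_of_hasLaw_gaussianReal hX hind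
    (t := τ / (8 * v)) (by linarith)
  refine (measure_ge_le_exp_mul_mgf _ (by positivity) hint).trans ?_
  grw [mgf_sum_sq_le_of_hasLaw_gaussianReal hX hind (by linarith), ← Real.exp_add]
  refine (congrArg Real.exp ?_).le
  field_simp
  ring

theorem measureReal_sum_sq_le_one_sub_mul_le (hX : ∀ i, HasLaw (X i) (gaussianReal 0 v) P)
    (hind : iIndepFun X P) (hv : v ≠ 0) (hτ₀ : 0 ≤ τ) :
    P.real {ω | (∑ i, X i ^ 2) ω ≤ (1 - τ) * (Fintype.card ι * v)} ≤
      Real.exp (-(τ ^ 2 * Fintype.card ι / 16)) := by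
  have := hind.isProbabilityMeasure
  have : (0 : ℝ) < v := NNReal.coe_pos.2 (pos_iff_ne_zero.2 hv)
  have ht : 2 * (-(τ / (8 * v))) * v = -(τ / 4) := by field_simp; ring
  have hint := integrable_exp_mul_sum_sq_of_hasLaw_gaussianReal hX hind
    (t := -(τ / (8 * v))) (by linarith)
  refine (measure_le_le_exp_mul_mgf _ (neg_nonpos.2 (by positivity)) hint).trans ?_
  grw [mgf_sum_sq_le_of_hasLaw_gaussianReal hX hind (by linarith), ← Real.exp_add]
  refine (congrArg Real.exp ?_).le
  field_simp
  ring

theorem measureReal_lt_abs_sum_sq_sub_le (hX : ∀ i, HasLaw (X i) (gaussianReal 0 v) P)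
    (hind : iIndepFun X P) (hv : v ≠ 0) (hτ₀ : 0 ≤ τ) (hτ₂ : τ ≤ 2) :
    P.real {ω | τ * (Fintype.card ι * v) < |∑ i, X i ω ^ 2 - Fintype.card ι * v|} ≤
      2 * Real.exp (-(τ ^ 2 * Fintype.card ι / 16)) := by
  have := hind.isProbabilityMeasure
  have hsub : {ω | τ * (Fintype.card ι * v) < |∑ i, X i ω ^ 2 - Fintype.card ι * v|} ⊆
      {ω | (1 + τ) * (Fintype.card ι * v) ≤ (∑ i, X i ^ 2) ω} ∪
        {ω | (∑ i, X i ^ 2) ω ≤ (1 - τ) * (Fintype.card ι * v)} := fun ω hω => by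
    simp only [Set.mem_union, Set.mem_ofPred_eq, Finset.sum_apply, Pi.pow_apply] at hω ⊢
    rcases lt_abs.1 hω with h | h
    · left; linarith
    · right; linarith
  refine (measureReal_mono hsub (measure_ne_top _ _)).trans ((measureReal_union_le _ _).trans ?_)
  rw [two_mul]
  exact add_le_add (measureReal_one_add_mul_le_sum_sq_le hX hind hv hτ₀ hτ₂)
    (measureReal_sum_sq_le_one_sub_mul_le hX hind hv hτ₀)

end ChiSquared

section GaussianSums

variable {Ω : Type*} {_ : MeasurableSpace Ω} {P : Measure Ω} {ι : Type*} [Fintype ι]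
  {X : ι → Ω → ℝ}

theorem hasLaw_sum_gaussianReal {a : ι → ℝ} {v : ι → ℝ≥0}
    (hX : ∀ i, HasLaw (X i) (gaussianReal (a i) (v i)) P) (hind : iIndepFun X P) :
    HasLaw (fun ω => ∑ i, X i ω) (gaussianReal (∑ i, a i) (∑ i, v i)) P := by
  have hmeas : ∀ i, AEMeasurable (X i) P := fun i => (hX i).aemeasurable
  have := hind.isProbabilityMeasure
  refine ⟨by fun_prop, Measure.ext_of_charFun ?_⟩
  ext t
  rw [hind.charFun_map_fun_sum_eq_prod hmeas, Finset.prod_apply]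
  simp only [(hX _).map_eq, charFun_gaussianReal, ← Complex.exp_sum, Finset.sum_sub_distrib,
    Finset.sum_div, Finset.mul_sum, Finset.sum_mul, Complex.ofReal_sum, NNReal.coe_sum]

theorem hasLaw_sum_mul_gaussianReal {v : ℝ≥0}
    (hX : ∀ i, HasLaw (X i) (gaussianReal 0 v) P) (hind : iIndepFun X P)
    (z : EuclideanSpace ℝ ι) :
    HasLaw (fun ω => ∑ i, X i ω * z i) (gaussianReal 0 (v * ‖z‖₊ ^ 2)) P := by
  have hlaw := hasLaw_sum_gaussianReal (fun i => gaussianReal_mul_const (hX i) (z i))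
    (hind.comp (fun i x => x * z i) fun _ => by fun_prop)
  convert! hlaw using 2
  · simp
  · ext
    simp [EuclideanSpace.real_norm_sq_eq, Finset.mul_sum, mul_comm]

end GaussianSums

theorem ofReal_one_sub_le_measure_of_measure_compl_le {Ω : Type*} {_ : MeasurableSpace Ω}
    {P : Measure Ω} [IsProbabilityMeasure P] {S : Set Ω} {p : ℝ} (hp : 0 ≤ p)
    (hS : P Sᶜ ≤ ENNReal.ofReal p) : ENNReal.ofReal (1 - p) ≤ P S := by
  rw [ENNReal.ofReal_sub _ hp, ENNReal.ofReal_one, tsub_le_iff_right]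
  calc 1 = P Set.univ := measure_univ.symm
    _ ≤ P S + P Sᶜ := measure_univ_le_add_compl S
    _ ≤ P S + ENNReal.ofReal p := by gcongr

theorem sq_mul_nine_pow_mul_two_exp_le {N s : ℕ} {a : ℝ} (hs : s ≠ 0)
    (ha : 1152 * (Real.log N + s) ≤ a) :
    (N : ℝ) ^ 2 * 9 ^ (2 * s) * (2 * Real.exp (-(a / 64))) ≤ Real.exp (-(a / 128)) := by
  rcases Nat.eq_zero_or_pos N with rfl | hN
  · simpa using Real.exp_nonneg _
  have hN' : (0 : ℝ) < N := Nat.cast_pos.2 hN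
  have hs' : (1 : ℝ) ≤ s := Nat.one_le_cast.2 (Nat.one_le_iff_ne_zero.2 hs)
  have hlog : 0 ≤ Real.log N := Real.log_natCast_nonneg N
  have hpairs : (N : ℝ) ^ 2 = Real.exp (2 * Real.log N) := by
    rw [two_mul, Real.exp_add, Real.exp_log hN', sq]
  have htwo : (2 : ℝ) ≤ Real.exp s := by linarith [Real.add_one_le_exp (s : ℝ)]
  have hthree : (3 : ℝ) ≤ Real.exp 2 := by linarith [Real.add_one_le_exp 2]
  have hnet : (9 : ℝ) ^ (2 * s) ≤ Real.exp (8 * s) :=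
    calc (9 : ℝ) ^ (2 * s) = 3 ^ (4 * s) := by rw [pow_mul, pow_mul]; norm_num
      _ ≤ Real.exp 2 ^ (4 * s) := by gcongr
      _ = Real.exp (8 * s) := by rw [← Real.exp_nat_mul]; push_cast; ring_nf
  -- `1152 = 9 * 128`, so half of the exponent `a / 64` absorbs `2 * log N + 9 * s`.
  calc (N : ℝ) ^ 2 * 9 ^ (2 * s) * (2 * Real.exp (-(a / 64)))
      ≤ Real.exp (2 * Real.log N) * Real.exp (8 * s) * (Real.exp s * Real.exp (-(a / 64))) := by
        rw [hpairs]; gcongr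
    _ = Real.exp (2 * Real.log N + 9 * s - a / 64) := by
        simp only [← Real.exp_add]; ring_nf
    _ ≤ Real.exp (-(a / 128)) := Real.exp_le_exp.2 (by linarith)

section GaussianMatrix

variable {m n : ℕ}

instance isProbabilityMeasure_gaussMatrix : IsProbabilityMeasure (gaussMatrix m n) := by
  unfold gaussMatrix
  infer_instance

theorem hasLaw_toEuclideanLin_apply_gaussMatrix (z : EuclideanSpace ℝ (Fin n)) (k : Fin m) :
    HasLaw (fun A : Fin m → Fin n → ℝ => Matrix.toEuclideanLin (Matrix.of A) z k)
      (gaussianReal 0 ((m : ℝ≥0)⁻¹ * ‖z‖₊ ^ 2)) (gaussMatrix m n) := by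
  have hrow : HasLaw (fun a : Fin n → ℝ => ∑ j, a j * z j)
      (gaussianReal 0 ((m : ℝ≥0)⁻¹ * ‖z‖₊ ^ 2)) (Measure.pi fun _ => gaussianReal 0 (m : ℝ≥0)⁻¹) :=
    hasLaw_sum_mul_gaussianReal (X := fun j (a : Fin n → ℝ) => a j)
      (fun j => (measurePreserving_eval (fun _ => gaussianReal 0 (m : ℝ≥0)⁻¹) j).hasLaw)
      (iIndepFun_pi (X := fun _ => id) fun _ => aemeasurable_id) z
  exact hrow.comp <|
    (measurePreserving_eval (fun _ => .pi fun _ => gaussianReal 0 (m : ℝ≥0)⁻¹) k).hasLaw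

theorem iIndepFun_toEuclideanLin_apply_gaussMatrix (z : EuclideanSpace ℝ (Fin n)) :
    iIndepFun (fun (k : Fin m) A => Matrix.toEuclideanLin (Matrix.of A) z k)
      (gaussMatrix m n) := by
  refine iIndepFun_pi (X := fun (_ : Fin m) (a : Fin n → ℝ) => ∑ j, a j * z j) fun _ => ?_
  exact Measurable.aemeasurable (by fun_prop)

theorem gaussMatrix_not_isNearIsometryAt_le {τ : ℝ} (hm : m ≠ 0) (hτ₀ : 0 ≤ τ) (hτ₂ : τ ≤ 2)
    (z : EuclideanSpace ℝ (Fin n)) :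
    gaussMatrix m n {A | ¬ IsNearIsometryAt τ (Matrix.toEuclideanLin (Matrix.of A)) z} ≤
      ENNReal.ofReal (2 * Real.exp (-(τ ^ 2 * m / 16))) := by
  rcases eq_or_ne z 0 with rfl | hz
  · simp [IsNearIsometryAt]
  have hvar : (m : ℝ≥0)⁻¹ * ‖z‖₊ ^ 2 ≠ 0 := by simp [hm, hz]
  have hmean : (m : ℝ) * ((m : ℝ≥0)⁻¹ * ‖z‖₊ ^ 2 : ℝ≥0) = ‖z‖ ^ 2 := by
    push_cast
    field_simp
  have htail := measureReal_lt_abs_sum_sq_sub_le (hasLaw_toEuclideanLin_apply_gaussMatrix z)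
    (iIndepFun_toEuclideanLin_apply_gaussMatrix z) hvar hτ₀ hτ₂
  simp only [Fintype.card_fin, hmean, ← EuclideanSpace.real_norm_sq_eq] at htail
  simp only [IsNearIsometryAt, not_le]
  exact (ENNReal.le_ofReal_iff_toReal_le (measure_ne_top _ _) (by positivity)).2 htail

theorem gaussMatrix_exists_not_isNearIsometryAt_sub_le {s : ℕ} {ι : Type*} [Fintype ι]
    (V : ι → Submodule ℝ (EuclideanSpace ℝ (Fin n))) (hs : s ≠ 0) (hV : ∀ i, finrank ℝ (V i) ≤ s)
    {α : ℝ} (hα₀ : 0 ≤ α) (hα₄ : α ≤ 4)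
    (hm : 1152 * (Real.log (Fintype.card ι) + s) ≤ α ^ 2 * m) :
    gaussMatrix m n {A | ∃ x₁ ∈ ⋃ i, (V i : Set (EuclideanSpace ℝ (Fin n))),
      ∃ x₂ ∈ ⋃ i, (V i : Set (EuclideanSpace ℝ (Fin n))),
        ¬ IsNearIsometryAt α (Matrix.toEuclideanLin (Matrix.of A)) (x₁ - x₂)} ≤
      ENNReal.ofReal (Real.exp (-(α ^ 2 * m / 128))) := by
  have hm₀ : m ≠ 0 := by
    rintro rfl
    rw [Nat.cast_zero, mul_zero] at hm
    have hs' : (0 : ℝ) < s := Nat.cast_pos.2 (Nat.pos_of_ne_zero hs)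
    linarith [Real.log_natCast_nonneg (Fintype.card ι)]
  have hunion := measure_exists_not_isNearIsometryAt_sub_le V hV (μ := gaussMatrix m n)
    (fun A => Matrix.toEuclideanLin (Matrix.of A)) (τ := α / 2) (by linarith)
    (gaussMatrix_not_isNearIsometryAt_le hm₀ (by linarith) (by linarith))
  rw [mul_div_cancel₀ α two_ne_zero, show (α / 2) ^ 2 * m / 16 = α ^ 2 * m / 64 by ring] at hunion
  refine (hunion.trans_eq ?_).trans
    (ENNReal.ofReal_le_ofReal (sq_mul_nine_pow_mul_two_exp_le hs hm))
  rw [ENNReal.ofReal_mul (p := _ * _) (by positivity),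
    ENNReal.ofReal_mul (p := _ ^ 2) (by positivity), ENNReal.ofReal_pow (by positivity),
    ENNReal.ofReal_pow (by positivity), ENNReal.ofReal_natCast, ENNReal.ofReal_ofNat]

end GaussianMatrix

/-- Union-bound step of Lemma 4: a Gaussian matrix with `m ≳ (log N + s)/α²` rows
satisfies S-REC(⋃ᵢ Vᵢ, 1-α, 0) over a union of `N` subspaces of dimension at most `s`,
with probability at least `1 - exp(-c α² m)`. -/
theorem gaussian_srec_on_union_of_subspaces :
    ∃ C c : ℝ, 0 < C ∧ 0 < c ∧
      ∀ (n N s m : ℕ) (V : Fin N → Submodule ℝ (EuclideanSpace ℝ (Fin n))),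
        (∀ i, Module.finrank ℝ (V i) ≤ s) →
        ∀ α : ℝ, α ∈ Set.Ioo (0 : ℝ) 1 →
          (m : ℝ) ≥ C * (Real.log N + s) / α ^ 2 →
          ENNReal.ofReal (1 - Real.exp (-c * α ^ 2 * m)) ≤
            gaussMatrix m n {A |
              ∀ x₁ ∈ ⋃ i, (V i : Set (EuclideanSpace ℝ (Fin n))),
                ∀ x₂ ∈ ⋃ i, (V i : Set (EuclideanSpace ℝ (Fin n))),
                  (1 - α) * ‖x₁ - x₂‖ ≤ ‖Matrix.toEuclideanLin (Matrix.of A) (x₁ - x₂)‖} := by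
  refine ⟨1152, 1 / 128, by norm_num, by norm_num, fun n N s m V hV α ⟨hα₀, hα₁⟩ hm => ?_⟩
  rw [ge_iff_le, div_le_iff₀' (by positivity)] at hm
  rcases eq_or_ne s 0 with rfl | hs
  · have hbot : ∀ i, V i = ⊥ := fun i => Submodule.finrank_eq_zero.1 (Nat.le_zero.1 (hV i))
    simp [hbot, Real.exp_nonneg]
  refine ofReal_one_sub_le_measure_of_measure_compl_le (Real.exp_nonneg _) ?_
  have hbad := gaussMatrix_exists_not_isNearIsometryAt_sub_le V hs hV hα₀.le (by linarith)
    (by simpa only [Fintype.card_fin] using hm)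
  rw [show -(1 / 128) * α ^ 2 * m = -(α ^ 2 * m / 128) by ring]
  refine (measure_mono fun A hA => ?_).trans hbad
  simp only [Set.mem_compl_iff, Set.mem_ofPred_eq, not_forall, exists_prop] at hA
  obtain ⟨x₁, hx₁, x₂, hx₂, hA⟩ := hA
  exact ⟨x₁, hx₁, x₂, hx₂, fun hnear => hA (hnear.one_sub_mul_norm_le hα₀.le hα₁.le)⟩
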